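/- arXiv:2109.13450 — 2 statements merged into one kernel-verified Lean document; each statement's English description precedes it below -/
import Mathlib

section
/- Let β > 0, θ > 0 and ε ∈ [0,1]. Define c = (θ/β)·log(1 + β/θ) and c' = (1 + θ/β)·log(1 + β/θ). Then the quantity ε·γ(N, c·N)/Γ(N) + (1 − ε)·Γ(N, c'·N)/Γ(N) tends to 0 as the natural number N tends to infinity. -/
open Filter Topology

/-- The lower incomplete gamma function `γ(s,x) = ∫₀ˣ t^(s-1) e^(-t) dt`. -/
noncomputable def lowerGamma (s x : ℝ) : ℝ := ∫ t in (0:ℝ)..x, t ^ (s - 1) * Real.exp (-t)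

/-- The upper incomplete gamma function `Γ(s,x) = ∫ₓ^∞ t^(s-1) e^(-t) dt`. -/
noncomputable def upperGamma (s x : ℝ) : ℝ := ∫ t in Set.Ioi x, t ^ (s - 1) * Real.exp (-t)

/-!
Tilting the exponential: where `(1 - a) * t ≤ (1 - a) * (a * s)`, one has
`e⁻ᵗ ≤ e^((1 - a) * s) * e^(-t / a)`, and `∫₀^∞ t^(s - 1) * e^(-t / a) dt = a^s * Γ(s)`. This is
Chernoff's bound for a gamma variable, with the optimal exponent: the lower tail below `a * s`
(`a ≤ 1`) and the upper tail above `a * s` (`1 ≤ a`) are both at most `(a * e^(1 - a))^s * Γ(s)`,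
and `a * e^(1 - a) < 1` unless `a = 1`.
-/

open MeasureTheory Set

section IncompleteGamma

variable {a s t x : ℝ}

lemma lowerGamma_nonneg (hx : 0 ≤ x) : 0 ≤ lowerGamma s x :=
  intervalIntegral.integral_nonneg hx fun _ ht =>
    mul_nonneg (Real.rpow_nonneg ht.1 _) (Real.exp_nonneg _)

lemma upperGamma_nonneg (hx : 0 ≤ x) : 0 ≤ upperGamma s x :=
  setIntegral_nonneg measurableSet_Ioi fun _ ht =>
    mul_nonneg (Real.rpow_nonneg (hx.trans (mem_Ioi.1 ht).le) _) (Real.exp_nonneg _)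

lemma integrableOn_rpow_mul_exp_neg_mul_Ioi {r : ℝ} (hs : 0 < s) (hr : 0 < r) :
    IntegrableOn (fun t : ℝ => t ^ (s - 1) * Real.exp (-(r * t))) (Ioi 0) := by
  simpa only [Real.rpow_one, neg_mul] using
    integrableOn_rpow_mul_exp_neg_mul_rpow (s := s - 1) (by linarith) one_pos hr

lemma exp_neg_le_exp_mul_exp_neg_inv_mul (ha : 0 < a)
    (h : (1 - a) * t ≤ (1 - a) * (a * s)) :
    Real.exp (-t) ≤ Real.exp ((1 - a) * s) * Real.exp (-(a⁻¹ * t)) := by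
  rw [← Real.exp_add, Real.exp_le_exp]
  have h_div : a⁻¹ * ((1 - a) * t) ≤ a⁻¹ * ((1 - a) * (a * s)) := by gcongr
  have h_left : a⁻¹ * ((1 - a) * t) = a⁻¹ * t - t := by field_simp
  have h_right : a⁻¹ * ((1 - a) * (a * s)) = (1 - a) * s := by field_simp
  linarith

lemma setIntegral_rpow_mul_exp_neg_le (ha : 0 < a) (hs : 0 < s) {S : Set ℝ}
    (hS : MeasurableSet S) (hS_pos : S ⊆ Ioi 0)
    (h : ∀ t ∈ S, (1 - a) * t ≤ (1 - a) * (a * s)) :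
    ∫ t in S, t ^ (s - 1) * Real.exp (-t) ≤ (a * Real.exp (1 - a)) ^ s * Real.Gamma s := by
  have h_int : IntegrableOn (fun t : ℝ => t ^ (s - 1) * Real.exp (-t)) (Ioi 0) := by
    simpa only [one_mul] using integrableOn_rpow_mul_exp_neg_mul_Ioi hs one_pos
  have h_int_tilted : IntegrableOn
      (fun t : ℝ => Real.exp ((1 - a) * s) * (t ^ (s - 1) * Real.exp (-(a⁻¹ * t)))) (Ioi 0) :=
    (integrableOn_rpow_mul_exp_neg_mul_Ioi hs (inv_pos.2 ha)).const_mul _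
  calc ∫ t in S, t ^ (s - 1) * Real.exp (-t)
      ≤ ∫ t in S, Real.exp ((1 - a) * s) * (t ^ (s - 1) * Real.exp (-(a⁻¹ * t))) := by
        refine setIntegral_mono_on (h_int.mono_set hS_pos) (h_int_tilted.mono_set hS_pos) hS
          fun t ht => ?_
        rw [mul_left_comm]
        exact mul_le_mul_of_nonneg_left (exp_neg_le_exp_mul_exp_neg_inv_mul ha (h t ht))
          (Real.rpow_nonneg (mem_Ioi.1 (hS_pos ht)).le _)
    _ ≤ ∫ t in Ioi 0, Real.exp ((1 - a) * s) * (t ^ (s - 1) * Real.exp (-(a⁻¹ * t))) := by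
        refine setIntegral_mono_set h_int_tilted ?_ hS_pos.eventuallyLE
        filter_upwards [ae_restrict_mem measurableSet_Ioi] with t (ht : 0 < t)
        simp only [Pi.zero_apply]
        positivity
    _ = Real.exp ((1 - a) * s) * (a ^ s * Real.Gamma s) := by
        rw [integral_const_mul, Real.integral_rpow_mul_exp_neg_mul_Ioi hs (inv_pos.2 ha),
          one_div, inv_inv]
    _ = (a * Real.exp (1 - a)) ^ s * Real.Gamma s := by
        rw [Real.mul_rpow ha.le (Real.exp_nonneg _), ← Real.exp_mul]
        ring

lemma lowerGamma_mul_le (ha : 0 < a) (ha_le : a ≤ 1) (hs : 0 < s) :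
    lowerGamma s (a * s) ≤ (a * Real.exp (1 - a)) ^ s * Real.Gamma s := by
  rw [lowerGamma, intervalIntegral.integral_of_le (by positivity)]
  exact setIntegral_rpow_mul_exp_neg_le ha hs measurableSet_Ioc Ioc_subset_Ioi_self
    fun _ ht => mul_le_mul_of_nonneg_left ht.2 (sub_nonneg.2 ha_le)

lemma upperGamma_mul_le (ha : 1 ≤ a) (hs : 0 < s) :
    upperGamma s (a * s) ≤ (a * Real.exp (1 - a)) ^ s * Real.Gamma s :=
  have ha_pos : 0 < a := one_pos.trans_le ha
  setIntegral_rpow_mul_exp_neg_le ha_pos hs measurableSet_Ioi (Ioi_subset_Ioi (by positivity))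
    fun _ ht => mul_le_mul_of_nonpos_left (mem_Ioi.1 ht).le (sub_nonpos.2 ha)

end IncompleteGamma

lemma mul_exp_one_sub_lt_one {a : ℝ} (ha : a ≠ 1) : a * Real.exp (1 - a) < 1 := by
  have h_lt : a < Real.exp (a - 1) := by
    simpa only [sub_add_cancel] using Real.add_one_lt_exp (sub_ne_zero.2 ha)
  calc a * Real.exp (1 - a) < Real.exp (a - 1) * Real.exp (1 - a) := by gcongr
    _ = 1 := by rw [← Real.exp_add, sub_add_sub_cancel, sub_self, Real.exp_zero]

lemma tendsto_div_Gamma_atTop_zero_of_le_rpow_mul {f : ℝ → ℝ} {r : ℝ} (hr : -1 < r)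
    (hr_lt : r < 1) (hf : ∀ s, 0 < s → 0 ≤ f s)
    (hf_le : ∀ s, 0 < s → f s ≤ r ^ s * Real.Gamma s) :
    Tendsto (fun s => f s / Real.Gamma s) atTop (𝓝 0) := by
  refine squeeze_zero' ?_ ?_ (tendsto_rpow_atTop_of_base_lt_one r hr hr_lt) <;>
    filter_upwards [eventually_gt_atTop 0] with s hs
  · exact div_nonneg (hf s hs) (Real.Gamma_pos_of_pos hs).le
  · exact (div_le_iff₀ (Real.Gamma_pos_of_pos hs)).2 (hf_le s hs)

lemma tendsto_lowerGamma_mul_div_Gamma {a : ℝ} (ha : 0 < a) (ha_lt : a < 1) :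
    Tendsto (fun s => lowerGamma s (a * s) / Real.Gamma s) atTop (𝓝 0) :=
  tendsto_div_Gamma_atTop_zero_of_le_rpow_mul (neg_one_lt_zero.trans (by positivity))
    (mul_exp_one_sub_lt_one ha_lt.ne) (fun _ hs => lowerGamma_nonneg (by positivity))
    fun _ => lowerGamma_mul_le ha ha_lt.le

lemma tendsto_upperGamma_mul_div_Gamma {a : ℝ} (ha : 1 < a) :
    Tendsto (fun s => upperGamma s (a * s) / Real.Gamma s) atTop (𝓝 0) :=
  have ha_pos : 0 < a := one_pos.trans ha
  tendsto_div_Gamma_atTop_zero_of_le_rpow_mul (neg_one_lt_zero.trans (by positivity))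
    (mul_exp_one_sub_lt_one ha.ne') (fun _ hs => upperGamma_nonneg (by positivity))
    fun _ => upperGamma_mul_le ha.le

section LogBounds

variable {x : ℝ}

lemma inv_mul_log_one_add_pos (hx : 0 < x) : 0 < x⁻¹ * Real.log (1 + x) :=
  mul_pos (inv_pos.2 hx) (Real.log_pos (by linarith))

lemma inv_mul_log_one_add_lt_one (hx : 0 < x) : x⁻¹ * Real.log (1 + x) < 1 := by
  rw [inv_mul_lt_one₀ hx]
  linarith [Real.log_lt_sub_one_of_pos (x := 1 + x) (by linarith) (by linarith)]

lemma one_lt_one_add_inv_mul_log_one_add (hx : 0 < x) :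
    1 < (1 + x⁻¹) * Real.log (1 + x) := by
  have h_log : x < (1 + x) * Real.log (1 + x) := by
    linarith [Real.self_sub_one_lt_mul_log (x := 1 + x) (by linarith) (by linarith)]
  calc 1 < x⁻¹ * ((1 + x) * Real.log (1 + x)) := (one_lt_inv_mul₀ hx).2 h_log
    _ = (1 + x⁻¹) * Real.log (1 + x) := by field_simp; ring

end LogBounds

theorem detection_error_tendsto_zero_general {β θ : ℝ} (ε : ℝ) (hβ : 0 < β) (hθ : 0 < θ) :
    Tendsto (fun s : ℝ =>
        ε * lowerGamma s ((θ / β * Real.log (1 + β / θ)) * s) / Real.Gamma s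
        + (1 - ε) * upperGamma s (((1 + θ / β) * Real.log (1 + β / θ)) * s) / Real.Gamma s)
      atTop (𝓝 0) := by
  have hx : 0 < β / θ := div_pos hβ hθ
  rw [← inv_div β θ]
  have h_lower := tendsto_lowerGamma_mul_div_Gamma (inv_mul_log_one_add_pos hx)
    (inv_mul_log_one_add_lt_one hx)
  have h_upper := tendsto_upperGamma_mul_div_Gamma (one_lt_one_add_inv_mul_log_one_add hx)
  simpa only [mul_div_assoc, mul_zero, add_zero] using
    (h_lower.const_mul ε).add (h_upper.const_mul (1 - ε))

/-- With `c = (θ/β)·log(1+β/θ)` and `c' = (1+θ/β)·log(1+β/θ)`, the detection error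
probability `ε·γ(N,cN)/Γ(N) + (1-ε)·Γ(N,c'N)/Γ(N)` tends to `0` as `N → ∞`. -/
theorem detection_error_tendsto_zero (β θ ε : ℝ) (hβ : 0 < β) (hθ : 0 < θ)
    (hε0 : 0 ≤ ε) (hε1 : ε ≤ 1) :
    Tendsto (fun N : ℕ =>
        ε * lowerGamma N ((θ / β * Real.log (1 + β / θ)) * N) / Real.Gamma N
        + (1 - ε) * upperGamma N (((1 + θ / β) * Real.log (1 + β / θ)) * N) / Real.Gamma N)
      atTop (𝓝 0) :=
  (detection_error_tendsto_zero_general ε hβ hθ).comp tendsto_natCast_atTop_atTop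
end

section
/- For every real s > 0 and every real x with 0 ≤ x < s, the lower incomplete gamma function satisfies γ(s, x) ≤ x^s · e^(−x) / (s − x). -/
/-!
Integration by parts gives the recurrence `γ(s+1, x) = s γ(s, x) - x^s e^(-x)`. Since `t ≤ x` on the
range of integration, also `γ(s+1, x) ≤ x γ(s, x)`, and so `(s - x) γ(s, x) ≤ x^s e^(-x)`.
-/

open Real MeasureTheory

theorem intervalIntegrable_rpow_mul_exp_neg {r : ℝ} (hr : -1 < r) (a b : ℝ) :
    IntervalIntegrable (fun t : ℝ => t ^ r * exp (-t)) volume a b :=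
  (intervalIntegral.intervalIntegrable_rpow' hr).mul_continuousOn (by fun_prop)

theorem lowerGamma_add_one {s : ℝ} (hs : 0 < s) (x : ℝ) :
    lowerGamma (s + 1) x = s * lowerGamma s x - x ^ s * exp (-x) := by
  have ne_zero_of_mem : ∀ t ∈ Set.Ioo (min 0 x) (max 0 x), t ≠ 0 := by grind
  have hasDerivAt_neg_exp_neg (t : ℝ) : HasDerivAt (fun t : ℝ => -exp (-t)) (exp (-t)) t :=
    (hasDerivAt_neg t).exp.neg.congr_deriv (by ring)
  have by_parts : ∫ t in (0 : ℝ)..x, t ^ s * exp (-t) =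
      x ^ s * -exp (-x) - 0 ^ s * -exp (-0) - ∫ t in (0 : ℝ)..x, s * t ^ (s - 1) * -exp (-t) :=
    intervalIntegral.integral_mul_deriv_eq_deriv_mul_of_hasDerivAt
      (continuous_rpow_const hs.le).continuousOn (by fun_prop)
      (fun t ht => hasDerivAt_rpow_const (p := s) (.inl (ne_zero_of_mem t ht)))
      (fun t _ => hasDerivAt_neg_exp_neg t)
      ((intervalIntegral.intervalIntegrable_rpow' (by linarith)).const_mul s)
      (Continuous.intervalIntegrable (by fun_prop) 0 x)
  calc lowerGamma (s + 1) x = ∫ t in (0 : ℝ)..x, t ^ s * exp (-t) := by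
        rw [lowerGamma, add_sub_cancel_right]
    _ = -(x ^ s * exp (-x)) + s * lowerGamma s x := by
        simpa [lowerGamma, zero_rpow hs.ne', mul_assoc] using by_parts
    _ = s * lowerGamma s x - x ^ s * exp (-x) := by ring

theorem lowerGamma_add_one_le_mul {s x : ℝ} (hs : 0 < s) (hx : 0 ≤ x) :
    lowerGamma (s + 1) x ≤ x * lowerGamma s x := by
  rw [lowerGamma, lowerGamma, add_sub_cancel_right, ← intervalIntegral.integral_const_mul]
  refine intervalIntegral.integral_mono_on hx
    (intervalIntegrable_rpow_mul_exp_neg (by linarith) 0 x)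
    ((intervalIntegrable_rpow_mul_exp_neg (by linarith) 0 x).const_mul x) fun t ht => ?_
  obtain ⟨ht0, htx⟩ := ht
  calc t ^ s * exp (-t) = t * (t ^ (s - 1) * exp (-t)) := by
        rw [← mul_assoc, mul_comm t, ← rpow_add_one' ht0 (by simpa using hs.ne'), sub_add_cancel]
    _ ≤ x * (t ^ (s - 1) * exp (-t)) := by gcongr

/-- For `s > 0` and `0 ≤ x < s`, the bound `γ(s,x) ≤ x^s e^(-x)/(s-x)` holds. -/
theorem lowerGamma_le (s x : ℝ) (hs : 0 < s) (hx0 : 0 ≤ x) (hxs : x < s) :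
    lowerGamma s x ≤ x ^ s * Real.exp (-x) / (s - x) := by
  rw [le_div_iff₀ (sub_pos.mpr hxs)]
  calc lowerGamma s x * (s - x) = s * lowerGamma s x - x * lowerGamma s x := by ring
    _ ≤ s * lowerGamma s x - lowerGamma (s + 1) x := by
        gcongr
        exact lowerGamma_add_one_le_mul hs hx0
    _ = x ^ s * exp (-x) := by rw [lowerGamma_add_one hs, sub_sub_cancel]
end
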